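/- arXiv:2003.06865 — 2 statements merged into one kernel-verified Lean document; each statement's English description precedes it below -/
import Mathlib

section
/- Let X be a simplicial set, R a ring, and T : Δ/X ⥤ Mod R a covariant local system, i.e. a functor sending every morphism of Δ/X to an isomorphism. Let T^{-1} : (Δ/X)ᵒᵖ ⥤ Mod R be the functor with T^{-1}(x) = T(x) on objects and T^{-1}(θ) = (T(θ))^{-1} on morphisms. Then for every n ≥ 0 there is an isomorphism between the n-th right derived functor of the limit over Δ/X applied to T and the n-th right derived functor of the limit over (Δ/X)ᵒᵖ applied to T^{-1}: lim^n_{Δ/X} T ≅ lim^n_{(Δ/X)ᵒᵖ} T^{-1}; equivalently, H^n_GZ(X, T) ≅ H^n((Δ/X)ᵒᵖ, T^{-1}). -/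
/-!
STATEMENT 12: For a simplicial set `X`, a ring `R` and a covariant local system
`T : Δ/X ⥤ Mod R` (a functor inverting all morphisms), with inverse contravariant system
`T⁻¹ : (Δ/X)ᵒᵖ ⥤ Mod R`, the `n`-th right derived functor of the limit over `Δ/X`
applied to `T` is isomorphic to the `n`-th right derived functor of the limit over
`(Δ/X)ᵒᵖ` applied to `T⁻¹`:  `lim^n_{Δ/X} T ≅ lim^n_{(Δ/X)ᵒᵖ} T⁻¹`.
-/

open CategoryTheory CategoryTheory.Limits Opposite

/-- The simplex category `Δ/X` of a simplicial set `X`, realized as the opposite of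
the category of elements of `X`. -/
abbrev SimplexCat (X : SSet.{0}) : Type := X.Elementsᵒᵖ

/-- The inverse of a functor inverting all morphisms: it has the same values on objects,
and sends a morphism `θ` to `(T(θ))⁻¹`. -/
noncomputable def invFunctor {C : Type*} [Category C] {𝒜 : Type*} [Category 𝒜]
    (T : C ⥤ 𝒜) (h : ∀ {x y : C} (θ : x ⟶ y), IsIso (T.map θ)) : Cᵒᵖ ⥤ 𝒜 where
  obj x := T.obj x.unop
  map {x y} θ := haveI := h θ.unop; inv (T.map θ.unop)
  map_id x := by simp
  map_comp {x y z} θ θ' := by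
    haveI := h θ.unop; haveI := h θ'.unop; haveI := h (θ'.unop ≫ θ.unop)
    dsimp
    apply IsIso.inv_eq_of_hom_inv_id
    rw [T.map_comp]
    simp

instance limAdditive {J : Type*} [Category J] {𝒜 : Type*} [Category 𝒜]
    [Limits.HasLimitsOfShape J 𝒜] [Preadditive 𝒜] :
    (Limits.lim (J := J) (C := 𝒜)).Additive where

/-!
The bar complex of a functor `T` on a small category `C` has in degree `n` the product of the
objects `T c₀` over the chains `c₀ ← c₁ ← ⋯ ← cₙ` of `C`. It is exact as a functor of `T`, its
zeroth cohomology is the limit of `T`, and it has no higher cohomology when `T` is coinduced from a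
family of objects, hence none when `T` is injective. Dimension shifting along an injective
resolution shows that its cohomology is `limⁿ T`.

A chain of `C` read backwards is a chain of `Cᵒᵖ`, with factor `T cₙ` in place of `T c₀`. When `T`
inverts all morphisms, the value of `T` on `cₙ ⟶ c₀` identifies the two factors, so that the bar
complexes of `T` and `T⁻¹` agree up to the signs of the reversals of the simplices.
-/

section Effaceable

variable {A B : Type*} [Category A] [Abelian A] [Category B] [Abelian B]

section Cycles

variable {ι : Type*} {c : ComplexShape ι} (K : HomologicalComplex A c)

lemma epi_toCycles_of_exactAt {i j : ι} (hi : c.prev j = i) (hK : K.ExactAt j) :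
    Epi (K.toCycles i j) :=
  Preadditive.epi_of_isZero_cokernel' _ (K.homologyIsCokernel i j hi) hK.isZero_homology

/-- The complex `Zⁱ ⟶ Kⁱ ⟶ Zʲ`, where `j` follows `i` and `Z` denotes cycles. -/
noncomputable abbrev cyclesShortComplex (i j : ι) : ShortComplex A :=
  ShortComplex.mk (K.iCycles i) (K.toCycles i j) (by simp [← cancel_mono (K.iCycles j)])

lemma cyclesShortComplex_shortExact {i j : ι} (hij : c.Rel i j) (hK : K.ExactAt j) :
    (cyclesShortComplex K i j).ShortExact where
  exact := ShortComplex.exact_of_f_is_kernel _ <|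
    isKernelOfComp (K.iCycles j) _ (K.cyclesIsKernel i j (c.next_eq' hij)) _ (K.toCycles_i i j)
  epi_g := epi_toCycles_of_exactAt K (c.prev_eq' hij) hK

variable (G : A ⥤ B) [G.Additive] [PreservesFiniteLimits G]

/-- A left exact functor preserves cycles. -/
noncomputable def cyclesMapIso (i : ι) :
    ((G.mapHomologicalComplex c).obj K).cycles i ≅ G.obj (K.cycles i) :=
  have hG : IsLimit (KernelFork.ofι (f := ((G.mapHomologicalComplex c).obj K).d i (c.next i))
      (G.map (K.iCycles i)) ((G.map_comp _ _).symm.trans (by rw [K.iCycles_d, G.map_zero]; rfl))) :=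
    isLimitForkMapOfIsLimit' G _ (K.cyclesIsKernel i _ rfl)
  (HomologicalComplex.cyclesIsKernel _ i _ rfl).conePointUniqueUpToIso hG

lemma cyclesMapIso_hom_iCycles (i : ι) :
    (cyclesMapIso K G i).hom ≫ G.map (K.iCycles i) =
      ((G.mapHomologicalComplex c).obj K).iCycles i :=
  IsLimit.conePointUniqueUpToIso_hom_comp _ _ WalkingParallelPair.zero

lemma toCycles_cyclesMapIso_hom (i j : ι) :
    ((G.mapHomologicalComplex c).obj K).toCycles i j ≫ (cyclesMapIso K G j).hom =
      G.map (K.toCycles i j) := by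
  refine (cancel_mono (G.map (K.iCycles j))).1 ?_
  have hG : G.map (K.d i j) = G.map (K.toCycles i j) ≫ G.map (K.iCycles j) := by
    rw [← G.map_comp, K.toCycles_i]
  exact (Category.assoc _ _ _).trans <|
    (congrArg _ (cyclesMapIso_hom_iCycles K G j)).trans <|
      (HomologicalComplex.toCycles_i _ i j).trans hG

/-- The homology of the image of a complex under a left exact functor `G` is the cokernel of
`G(Kⁱ) ⟶ G(Zʲ)`. -/
noncomputable def homologyMapIsoCokernel {i j : ι} (hi : c.prev j = i) :
    ((G.mapHomologicalComplex c).obj K).homology j ≅ cokernel (G.map (K.toCycles i j)) :=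
  (HomologicalComplex.homologyIsCokernel _ i j hi).coconePointUniqueUpToIso (colimit.isColimit _)
    ≪≫ cokernel.mapIso _ _ (Iso.refl _) (cyclesMapIso K G j)
      ((toCycles_cyclesMapIso_hom K G i j).trans (Category.id_comp _).symm)

end Cycles

variable (Φ : A ⥤ CochainComplex B ℕ) [Φ.PreservesZeroMorphisms] [PreservesFiniteLimits Φ]
  [PreservesFiniteColimits Φ]

/-- The first step of dimension shifting: the boundary case `δIso` does not cover, since the degree
zero homology of the middle term need not vanish. -/
noncomputable def homologyOneIsoCokernel {S : ShortComplex A} (hS : S.ShortExact)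
    (h : (Φ.obj S.X₂).ExactAt 1) :
    (Φ.obj S.X₁).homology 1 ≅ cokernel (HomologicalComplex.homologyMap (Φ.map S.g) 0) :=
  have hΦ := hS.map_of_exact Φ
  haveI := hΦ.epi_δ 0 1 rfl h.isZero_homology
  (hΦ.homology_exact₃ 0 1 rfl).gIsCokernel.coconePointUniqueUpToIso (colimit.isColimit _)

/-- Dimension shifting along a complex `J` which is exact in positive degrees and has `Φ`-acyclic
terms. -/
noncomputable def homologyCyclesIso {J : CochainComplex A ℕ} (hJ : ∀ n, J.ExactAt (n + 1))
    (hΦ : ∀ i n, (Φ.obj (J.X i)).ExactAt (n + 1)) :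
    ∀ i m n : ℕ, m + i = n →
      ((Φ.obj (J.cycles i)).homology (m + 1) ≅ (Φ.obj (J.cycles 0)).homology (n + 1))
  | 0, _, _, rfl => Iso.refl _
  | i + 1, m, n, h =>
    ((cyclesShortComplex_shortExact J rfl (hJ i)).map_of_exact Φ).δIso (m + 1) (m + 1 + 1) rfl
        (hΦ i m).isZero_homology (hΦ i (m + 1)).isZero_homology ≪≫
      homologyCyclesIso hJ hΦ i (m + 1) n (by lia)

variable {G : A ⥤ B} [G.Additive] [PreservesFiniteLimits G] [HasInjectiveResolutions A]

/-- A functor `Φ` to cochain complexes which is exact and whose value on injective objects is exact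
in positive degrees computes the right derived functors of its zeroth cohomology. -/
noncomputable def rightDerivedIsoHomology (e : G ≅ Φ ⋙ HomologicalComplex.homologyFunctor _ _ 0)
    (hΦ : ∀ (I : A) [Injective I] (n : ℕ), (Φ.obj I).ExactAt (n + 1)) (X : A) :
    ∀ n : ℕ, (G.rightDerived n).obj X ≅ (Φ.obj X).homology n
  | 0 => G.rightDerivedZeroIsoSelf.app X ≪≫ e.app X
  | n + 1 =>
    let I := injectiveResolution X
    have hI := cyclesShortComplex_shortExact I.cocomplex (i := n) rfl (I.cocomplex_exactAt_succ n)
    I.isoRightDerivedObj G (n + 1) ≪≫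
      homologyMapIsoCokernel I.cocomplex G (CochainComplex.prev_nat_succ n) ≪≫
      cokernel.mapIso _ _ (e.app _) (e.app _) (e.hom.naturality _) ≪≫
      (homologyOneIsoCokernel Φ hI (hΦ _ 0)).symm ≪≫
      homologyCyclesIso Φ I.cocomplex_exactAt_succ (fun i n => hΦ _ n) n 0 n (zero_add n) ≪≫
      HomologicalComplex.homologyMapIso (Φ.mapIso <|
        (I.cocomplex.cyclesIsKernel 0 1 (by simp)).conePointUniqueUpToIso I.isLimitKernelFork)
          (n + 1)

end Effaceable

open AlgebraicTopology Simplicial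

section Reversal

variable {𝒜 : Type*} [Category 𝒜] {X Y : CosimplicialObject 𝒜}

lemma δ_comp_rev_app (e : SimplexCategory.rev ⋙ X ≅ Y) {n : ℕ} (i : Fin (n + 2)) :
    X.δ i ≫ e.hom.app ⦋n + 1⦌ = e.hom.app ⦋n⦌ ≫ Y.δ i.rev := by
  have rev_δ : X.map (SimplexCategory.rev.map (SimplexCategory.δ i.rev)) = X.δ i :=
    congrArg X.map ((SimplexCategory.rev_map_δ i.rev).trans (congrArg _ i.rev_rev))
  exact (rev_δ.symm =≫ _).trans (e.hom.naturality (SimplexCategory.δ i.rev))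

variable [Preadditive 𝒜]

lemma alternatingCofaceMapComplex_d (X : CosimplicialObject 𝒜) (n : ℕ) :
    ((alternatingCofaceMapComplex 𝒜).obj X).d n (n + 1) =
      AlternatingCofaceMapComplex.objD X n :=
  CochainComplex.of_d (fun n : ℕ => X.obj ⦋n⦌) _ n

lemma objD_zero (X : CosimplicialObject 𝒜) :
    AlternatingCofaceMapComplex.objD X 0 = X.δ 0 - X.δ 1 := by
  simp [AlternatingCofaceMapComplex.objD, Fin.sum_univ_two, sub_eq_add_neg]

/-- The sign `(-1)ⁿ⁽ⁿ⁺¹⁾ᐟ²` of the permutation reversing the vertices of an `n`-simplex. -/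
def reversalSign (n : ℕ) : ℤˣ := (-1) ^ (n + 1).choose 2

lemma reversalSign_succ (n : ℕ) : reversalSign (n + 1) = (-1) ^ (n + 1) * reversalSign n := by
  rw [reversalSign, reversalSign, Nat.choose_succ_succ' (n + 1) 1, Nat.choose_one_right, pow_add]

lemma reversalSign_smul_comp_objD {n : ℕ} (f : X.obj ⦋n⦌ ⟶ Y.obj ⦋n⦌)
    (g : X.obj ⦋n + 1⦌ ⟶ Y.obj ⦋n + 1⦌) (hfg : ∀ i : Fin (n + 2), X.δ i ≫ g = f ≫ Y.δ i.rev) :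
    (reversalSign n • f) ≫ AlternatingCofaceMapComplex.objD Y n =
      AlternatingCofaceMapComplex.objD X n ≫ (reversalSign (n + 1) • g) := by
  have face_sign (i : Fin (n + 2)) :
      (-1 : ℤ) ^ (n + 1 - i : ℕ) = (-1) ^ (i : ℕ) * (-1) ^ (n + 1) := by
    rw [← pow_add, neg_one_pow_congr]
    grind
  simp only [AlternatingCofaceMapComplex.objD, Preadditive.comp_sum, Preadditive.sum_comp]
  refine (Fintype.sum_equiv Fin.revPerm _ _ fun i => ?_).symm
  simp [Units.smul_def, hfg, face_sign, reversalSign_succ, smul_smul, mul_comm, mul_left_comm]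

/-- Cosimplicial objects which agree up to reversing the order of the cofaces have isomorphic
alternating coface complexes. -/
noncomputable def cofaceComplexIsoOfRevIso (e : SimplexCategory.rev ⋙ X ≅ Y) :
    (alternatingCofaceMapComplex 𝒜).obj X ≅ (alternatingCofaceMapComplex 𝒜).obj Y :=
  HomologicalComplex.Hom.isoOfComponents (fun n => reversalSign n • e.app ⦋n⦌) <| by
    rintro n _ rfl
    rw [alternatingCofaceMapComplex_d, alternatingCofaceMapComplex_d]
    exact reversalSign_smul_comp_objD _ _ (δ_comp_rev_app e)

end Reversal

section ExtraCodegeneracy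

variable {𝒜 : Type*} [Category 𝒜] [Abelian 𝒜]

lemma exact_of_contraction (S : ShortComplex 𝒜) (s : S.X₂ ⟶ S.X₁) (t : S.X₃ ⟶ S.X₂)
    (h : S.g ≫ t + s ≫ S.f = 𝟙 S.X₂) : S.Exact :=
  S.exact_iff_exact_up_to_refinements.2 fun W x hx =>
    ⟨W, 𝟙 W, inferInstance, x ≫ s, by simpa [reassoc_of% hx] using (congrArg (x ≫ ·) h).symm⟩

variable {X : CosimplicialObject 𝒜}

lemma objD_comp_add_comp_objD {n : ℕ} (s : X.obj ⦋n + 1⦌ ⟶ X.obj ⦋n⦌)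
    (t : X.obj ⦋n + 2⦌ ⟶ X.obj ⦋n + 1⦌) (zero : X.δ 0 ≫ t = 𝟙 _)
    (succ : ∀ i : Fin (n + 2), X.δ i.succ ≫ t = s ≫ X.δ i) :
    AlternatingCofaceMapComplex.objD X (n + 1) ≫ t +
      s ≫ AlternatingCofaceMapComplex.objD X n = 𝟙 _ := by
  simp [AlternatingCofaceMapComplex.objD, Preadditive.sum_comp, Preadditive.comp_sum,
    Fin.sum_univ_succ (n := n + 2), zero, succ, pow_succ]

lemma exactAt_succ_of_extraCodegeneracy (s : ∀ n : ℕ, X.obj ⦋n + 1⦌ ⟶ X.obj ⦋n⦌)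
    (zero : ∀ n, X.δ 0 ≫ s n = 𝟙 _)
    (succ : ∀ (n : ℕ) (i : Fin (n + 2)), X.δ i.succ ≫ s (n + 1) = s n ≫ X.δ i) (n : ℕ) :
    ((alternatingCofaceMapComplex 𝒜).obj X).ExactAt (n + 1) := by
  refine (HomologicalComplex.exactAt_iff' _ n (n + 1) (n + 2) (by simp) (by simp)).2
    (exact_of_contraction _ (s n) (s (n + 1)) ?_)
  simp only [HomologicalComplex.shortComplexFunctor'_obj_f,
    HomologicalComplex.shortComplexFunctor'_obj_g, alternatingCofaceMapComplex_d]
  exact objD_comp_add_comp_objD (s n) (s (n + 1)) (zero _) (succ n)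

end ExtraCodegeneracy

section InvFunctor

variable {C : Type*} [Category C] {𝒜 : Type*} [Category 𝒜] (T : C ⥤ 𝒜)
  (h : ∀ {x y : C} (θ : x ⟶ y), IsIso (T.map θ))

lemma map_unop_comp_invFunctor_map {x y : Cᵒᵖ} (a : x ⟶ y) :
    T.map a.unop ≫ (invFunctor T h).map a = 𝟙 _ :=
  haveI := h a.unop
  IsIso.hom_inv_id _

instance isIso_invFunctor_map {x y : Cᵒᵖ} (a : x ⟶ y) : IsIso ((invFunctor T h).map a) :=
  haveI := h a.unop
  inferInstanceAs (IsIso (inv (T.map a.unop)))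

lemma invFunctor_map_comp_map_chain {n : ℕ} (σ : ComposableArrows Cᵒᵖᵒᵖ n) {i j k : Fin (n + 1)}
    (hij : i ≤ j) (hjk : j ≤ k) :
    (invFunctor T h).map (σ.map (homOfLE hjk)).unop ≫
        (invFunctor T h).map (σ.map (homOfLE hij)).unop =
      (invFunctor T h).map (σ.map (homOfLE (hij.trans hjk))).unop := by
  rw [← Functor.map_comp, ← unop_comp, ← σ.map_comp, homOfLE_comp]

lemma map_comp_invFunctor_map_chain {n : ℕ} (σ : ComposableArrows Cᵒᵖᵒᵖ n) {i j k : Fin (n + 1)}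
    (hij : i ≤ j) (hjk : j ≤ k) :
    T.map (σ.map (homOfLE hjk)).unop.unop ≫
        (invFunctor T h).map (σ.map (homOfLE (hij.trans hjk))).unop =
      (invFunctor T h).map (σ.map (homOfLE hij)).unop := by
  rw [← invFunctor_map_comp_map_chain T h σ hij hjk]
  exact (Category.assoc _ _ _).symm.trans <|
    (map_unop_comp_invFunctor_map T h (σ.map (homOfLE hjk)).unop =≫ _).trans (Category.id_comp _)

end InvFunctor

section ReverseChain

/-- The order-reversing involution of `Fin (n + 1)` as a functor. -/
def revFunctor (n : ℕ) : Fin (n + 1) ⥤ (Fin (n + 1))ᵒᵖ where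
  obj i := op i.rev
  map f := (homOfLE (Fin.rev_le_rev.2 (leOfHom f))).op

lemma revFunctor_comp_op (n : ℕ) : revFunctor n ⋙ (revFunctor n).op = opOp _ :=
  CategoryTheory.Functor.ext (fun i => congrArg (fun j => op (op j)) i.rev_rev) fun _ _ _ =>
    Quiver.Hom.unop_inj (Subsingleton.elim _ _)

lemma rev_map_comp_revFunctor {m n : SimplexCategory} (θ : m ⟶ n) :
    (SimplexCategory.rev.map θ).toOrderHom.monotone.functor ⋙ revFunctor n.len =
      revFunctor m.len ⋙ θ.toOrderHom.monotone.functor.op :=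
  CategoryTheory.Functor.ext (fun i => congrArg op (θ.toOrderHom i.rev).rev_rev) fun _ _ _ =>
    Quiver.Hom.unop_inj (Subsingleton.elim _ _)

/-- Reading a chain in `Cᵒᵖ` backwards as a chain in `C`. -/
def reverseChain (C : Type*) [Category C] (n : ℕ) :
    ComposableArrows Cᵒᵖ n ≃ ComposableArrows C n where
  toFun σ := revFunctor n ⋙ σ.leftOp
  invFun ρ := revFunctor n ⋙ ρ.op
  left_inv σ := congrArg (· ⋙ σ.leftOp.op) (revFunctor_comp_op n)
  right_inv ρ := congrArg (· ⋙ ρ.op.leftOp) (revFunctor_comp_op n)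

end ReverseChain

section Bar

universe w v u

variable {J : Type w} [SmallCategory J] {𝒜 : Type u} [Category.{v} 𝒜] [HasProducts.{w} 𝒜]

/-- The cosimplicial bar construction of a functor `T`. The index `σ` runs over the simplices of the
nerve of `Jᵒᵖ`, that is, over the chains `j₀ ← j₁ ← ⋯ ← jₙ` in `J`, and its factor is `T j₀`. -/
noncomputable def barObj (T : J ⥤ 𝒜) : CosimplicialObject 𝒜 where
  obj n := ∏ᶜ fun σ : ComposableArrows Jᵒᵖ n.len => T.obj (σ.obj 0).unop
  map θ := Pi.lift fun σ => Pi.π _ (σ.whiskerLeft θ.toOrderHom.monotone.functor) ≫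
    T.map (σ.map (homOfLE (Fin.zero_le _))).unop
  map_id n := by
    refine Pi.hom_ext _ _ fun σ => ?_
    have hσ : T.map (σ.map (𝟙 0)).unop = 𝟙 _ := by rw [σ.map_id, unop_id, T.map_id]
    rw [Pi.lift_π, Category.id_comp]
    exact (_ ≫= hσ).trans (Category.comp_id _)
  map_comp {k m n} θ φ := by
    refine Pi.hom_ext _ _ fun σ => ?_
    have hσ {i j : Fin (n.len + 1)} (f : 0 ⟶ i) (g : i ⟶ j) :
        T.map (σ.map (f ≫ g)).unop = T.map (σ.map g).unop ≫ T.map (σ.map f).unop := by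
      rw [σ.map_comp, unop_comp, T.map_comp]
    rw [Pi.lift_π, Category.assoc, Pi.lift_π, Pi.lift_π_assoc, Category.assoc]
    exact _ ≫= hσ _ _

section Projections

variable {T : J ⥤ 𝒜}

/-- The factor of `barObj T` indexed by a chain. -/
noncomputable def barπ (T : J ⥤ 𝒜) {n : SimplexCategory} (σ : ComposableArrows Jᵒᵖ n.len) :
    (barObj T).obj n ⟶ T.obj (σ.obj 0).unop :=
  Pi.π _ σ

lemma bar_hom_ext {n : SimplexCategory} {W : 𝒜} {f g : W ⟶ (barObj T).obj n}
    (h : ∀ σ : ComposableArrows Jᵒᵖ n.len, f ≫ barπ T σ = g ≫ barπ T σ) : f = g :=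
  Pi.hom_ext _ _ h

/-- A morphism to `barObj T` given by its components. -/
noncomputable def barLift {n : SimplexCategory} {W : 𝒜}
    (f : ∀ σ : ComposableArrows Jᵒᵖ n.len, W ⟶ T.obj (σ.obj 0).unop) : W ⟶ (barObj T).obj n :=
  Pi.lift f

lemma barLift_barπ {n : SimplexCategory} {W : 𝒜}
    (f : ∀ σ : ComposableArrows Jᵒᵖ n.len, W ⟶ T.obj (σ.obj 0).unop)
    (σ : ComposableArrows Jᵒᵖ n.len) : barLift f ≫ barπ T σ = f σ :=
  Pi.lift_π _ _

lemma barObj_map_barπ {m n : SimplexCategory} (θ : m ⟶ n) (σ : ComposableArrows Jᵒᵖ n.len) :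
    (barObj T).map θ ≫ barπ T σ =
      barπ T (σ.whiskerLeft θ.toOrderHom.monotone.functor) ≫
        T.map (σ.map (homOfLE (Fin.zero_le _))).unop :=
  Pi.lift_π _ _

end Projections

/-- The bar construction `barObj` as a functor. -/
noncomputable def bar : (J ⥤ 𝒜) ⥤ CosimplicialObject 𝒜 where
  obj := barObj
  map {S T} α :=
    { app n := barLift fun σ => barπ S σ ≫ α.app (σ.obj 0).unop
      naturality k n θ := by
        refine bar_hom_ext fun σ => ?_
        rw [Category.assoc, Category.assoc, barLift_barπ, reassoc_of% @barObj_map_barπ,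
          barObj_map_barπ, reassoc_of% @barLift_barπ]
        exact (_ ≫= (α.naturality _)).trans (Category.assoc _ _ _).symm }
  map_id T := CosimplicialObject.hom_ext _ _ fun n => bar_hom_ext fun σ =>
    (barLift_barπ _ σ).trans ((Category.comp_id _).trans (Category.id_comp _).symm)
  map_comp α β := CosimplicialObject.hom_ext _ _ fun n => bar_hom_ext fun σ =>
    (barLift_barπ _ σ).trans <| .symm <| (Category.assoc _ _ _).trans <|
      (_ ≫= (barLift_barπ _ σ)).trans <| by
        rw [reassoc_of% @barLift_barπ, Category.assoc]
        rfl

lemma bar_map_app_barπ {S T : J ⥤ 𝒜} (α : S ⟶ T) {n : SimplexCategory}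
    (σ : ComposableArrows Jᵒᵖ n.len) :
    (bar.map α).app n ≫ barπ T σ = barπ S σ ≫ α.app (σ.obj 0).unop :=
  barLift_barπ _ _

/-- The bar complex of a functor `T`, which computes the derived functors of the limit of `T`. -/
noncomputable abbrev barComplex (J : Type w) [SmallCategory J] (𝒜 : Type u) [Category.{v} 𝒜]
    [HasProducts.{w} 𝒜] [Preadditive 𝒜] : (J ⥤ 𝒜) ⥤ CochainComplex 𝒜 ℕ :=
  bar ⋙ alternatingCofaceMapComplex 𝒜

section Exactness

variable [Preadditive 𝒜]

/-- The terms of the bar complex are products of evaluations. -/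
noncomputable def barComplexEvalIso (n : ℕ) :
    barComplex J 𝒜 ⋙ HomologicalComplex.eval 𝒜 _ n ≅
      (Functor.whiskeringLeft _ _ 𝒜).obj
        (Discrete.functor fun σ : ComposableArrows Jᵒᵖ n => (σ.obj 0).unop) ⋙ lim :=
  let F : Discrete (ComposableArrows Jᵒᵖ n) ⥤ J := Discrete.functor fun σ => (σ.obj 0).unop
  let e (T : J ⥤ 𝒜) : (bar.obj T).obj ⦋n⦌ ≅ limit (F ⋙ T) :=
    HasLimit.isoOfNatIso <| Discrete.natIso fun σ : Discrete (ComposableArrows Jᵒᵖ n) =>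
      Iso.refl (T.obj (σ.as.obj 0).unop)
  have he (T : J ⥤ 𝒜) (σ) : (e T).hom ≫ limit.π (F ⋙ T) σ = barπ T (n := ⦋n⦌) σ.as :=
    (HasLimit.isoOfNatIso_hom_π _ _).trans (Category.comp_id _)
  NatIso.ofComponents e fun {S T} α => limit.hom_ext fun σ => by
    change ((bar.map α).app ⦋n⦌ ≫ (e T).hom) ≫ limit.π (F ⋙ T) σ =
      ((e S).hom ≫ limMap (F.whiskerLeft α)) ≫ limit.π (F ⋙ T) σ
    rw [Category.assoc, he, Category.assoc, limMap_π, reassoc_of% he]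
    exact bar_map_app_barπ α _

instance : (barComplex J 𝒜).PreservesZeroMorphisms where
  map_zero S T := by
    ext n
    refine bar_hom_ext fun σ => ?_
    exact (barLift_barπ _ _).trans (comp_zero.trans zero_comp.symm)

noncomputable instance [HasFiniteLimits 𝒜] : PreservesFiniteLimits (barComplex J 𝒜) where
  preservesFiniteLimits _ _ _ :=
    HomologicalComplex.preservesLimitsOfShape_of_eval _ fun n =>
      preservesLimitsOfShape_of_natIso (barComplexEvalIso n).symm

noncomputable instance [HasFiniteColimits 𝒜] [AB4StarOfSize.{w} 𝒜] :
    PreservesFiniteColimits (barComplex J 𝒜) where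
  preservesFiniteColimits _ _ _ :=
    HomologicalComplex.preservesColimitsOfShape_of_eval _ fun n =>
      preservesColimitsOfShape_of_natIso (barComplexEvalIso n).symm

end Exactness

section HomologyZero

variable {T : J ⥤ 𝒜}

/-- The factor `T j` of the zeroth term of `barObj T`. -/
noncomputable def barπ₀ (T : J ⥤ 𝒜) (j : J) : (barObj T).obj ⦋0⦌ ⟶ T.obj j :=
  barπ T (ComposableArrows.mk₀ (op j))

lemma barπ_eq_barπ₀ (σ : ComposableArrows Jᵒᵖ 0) :
    barπ T (n := ⦋0⦌) σ = barπ₀ T (σ.obj 0).unop := by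
  obtain ⟨j, rfl⟩ := ComposableArrows.mk₀_surjective σ
  rfl

lemma barObj_δ_zero_barπ (σ : ComposableArrows Jᵒᵖ 1) :
    (barObj T).δ 0 ≫ barπ T (n := ⦋1⦌) σ =
      barπ₀ T (σ.obj 1).unop ≫ T.map (σ.map (homOfLE (Fin.zero_le 1))).unop :=
  (barObj_map_barπ _ σ).trans (barπ_eq_barπ₀ _ =≫ _)

lemma barObj_δ_one_barπ (σ : ComposableArrows Jᵒᵖ 1) :
    (barObj T).δ 1 ≫ barπ T (n := ⦋1⦌) σ = barπ₀ T (σ.obj 0).unop := by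
  have hσ : T.map (σ.map (𝟙 0)).unop = 𝟙 _ := by rw [σ.map_id, unop_id, T.map_id]
  exact (barObj_map_barπ _ σ).trans <| (congrArg₂ (· ≫ ·) (barπ_eq_barπ₀ _) hσ).trans
    (Category.comp_id _)

lemma barπ₀_comp_map_of_δ_eq {W : 𝒜} {k : W ⟶ (barObj T).obj ⦋0⦌}
    (hk : k ≫ (barObj T).δ 0 = k ≫ (barObj T).δ 1) {i j : J} (f : i ⟶ j) :
    (k ≫ barπ₀ T i) ≫ T.map f = k ≫ barπ₀ T j := by
  have h := hk =≫ barπ T (n := ⦋1⦌) (ComposableArrows.mk₁ f.op)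
  simp only [Category.assoc] at h
  rw [barObj_δ_zero_barπ, barObj_δ_one_barπ] at h
  exact (Category.assoc _ _ _).trans h

lemma comp_barComplex_d_eq_zero_iff [Preadditive 𝒜] {W : 𝒜} (k : W ⟶ (barObj T).obj ⦋0⦌) :
    k ≫ ((barComplex J 𝒜).obj T).d 0 1 = 0 ↔ k ≫ (barObj T).δ 0 = k ≫ (barObj T).δ 1 := by
  have h : ((barComplex J 𝒜).obj T).d 0 1 = (barObj T).δ 0 - (barObj T).δ 1 :=
    (alternatingCofaceMapComplex_d _ 0).trans (objD_zero _)
  rw [h, ← sub_eq_zero (a := k ≫ _)]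
  exact (congrArg (· = 0) (Preadditive.comp_sub _ _ _)).to_iff

variable [HasLimitsOfShape J 𝒜]

/-- The inclusion of the limit of `T` in the zeroth term of `barObj T`. -/
noncomputable def limitToBar (T : J ⥤ 𝒜) : limit T ⟶ (barObj T).obj ⦋0⦌ :=
  barLift fun σ => limit.π T (σ.obj 0).unop

lemma limitToBar_barπ₀ (j : J) : limitToBar T ≫ barπ₀ T j = limit.π T j :=
  barLift_barπ _ _

lemma limitToBar_barπ (σ : ComposableArrows Jᵒᵖ 0) :
    limitToBar T ≫ barπ T (n := ⦋0⦌) σ = limit.π T (σ.obj 0).unop :=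
  barLift_barπ _ _

instance : Mono (limitToBar T) where
  right_cancellation f g h := limit.hom_ext fun j => by
    rw [← limitToBar_barπ₀, reassoc_of% h]

lemma limitToBar_comp_δ : limitToBar T ≫ (barObj T).δ 0 = limitToBar T ≫ (barObj T).δ 1 :=
  bar_hom_ext (n := ⦋1⦌) fun σ => by
    rw [Category.assoc, Category.assoc, barObj_δ_zero_barπ, barObj_δ_one_barπ, limitToBar_barπ₀,
      reassoc_of% @limitToBar_barπ₀, limit.w]

/-- The cone with legs `k ≫ barπ₀ T j`, where `k` equalizes the two cofaces. -/
noncomputable def coneOfδEq {W : 𝒜} (k : W ⟶ (barObj T).obj ⦋0⦌)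
    (hk : k ≫ (barObj T).δ 0 = k ≫ (barObj T).δ 1) : Cone T where
  pt := W
  π :=
    { app j := k ≫ barπ₀ T j
      naturality _ _ f := (Category.id_comp _).trans (barπ₀_comp_map_of_δ_eq hk f).symm }

lemma lift_coneOfδEq_comp_limitToBar {W : 𝒜} (k : W ⟶ (barObj T).obj ⦋0⦌)
    (hk : k ≫ (barObj T).δ 0 = k ≫ (barObj T).δ 1) :
    limit.lift T (coneOfδEq k hk) ≫ limitToBar T = k :=
  bar_hom_ext (n := ⦋0⦌) fun σ => by
    rw [Category.assoc, limitToBar_barπ, limit.lift_π, barπ_eq_barπ₀]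
    rfl

lemma limitToBar_naturality {S : J ⥤ 𝒜} (α : S ⟶ T) :
    limMap α ≫ limitToBar T = limitToBar S ≫ (bar.map α).app ⦋0⦌ :=
  bar_hom_ext (n := ⦋0⦌) fun σ => by
    rw [Category.assoc, limitToBar_barπ, limMap_π]
    exact .symm <| (Category.assoc _ _ _).trans <|
      (_ ≫= (bar_map_app_barπ α σ)).trans ((reassoc_of% (limitToBar_barπ (T := S) σ)) _)

/-- The limit of `T` is the kernel of the first differential of the bar complex. -/
noncomputable def limitToBarIsKernel [Preadditive 𝒜] (T : J ⥤ 𝒜) :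
    IsLimit (KernelFork.ofι (f := ((barComplex J 𝒜).obj T).d 0 1) (limitToBar T)
      ((comp_barComplex_d_eq_zero_iff _).2 limitToBar_comp_δ)) :=
  haveI : Mono (Y := ((barComplex J 𝒜).obj T).X 0) (limitToBar T) :=
    inferInstanceAs (Mono (limitToBar T))
  KernelFork.IsLimit.ofι' _ _ fun k hk =>
    ⟨_, lift_coneOfδEq_comp_limitToBar k ((comp_barComplex_d_eq_zero_iff k).1 hk)⟩

variable [Abelian 𝒜]

/-- The limit of `T` as the zeroth cocycles of the bar complex. -/
noncomputable def limitIsoCycles (T : J ⥤ 𝒜) : limit T ≅ ((barComplex J 𝒜).obj T).cycles 0 :=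
  (limitToBarIsKernel T).conePointUniqueUpToIso
    (((barComplex J 𝒜).obj T).cyclesIsKernel 0 1 (by simp))

lemma limitIsoCycles_hom_iCycles :
    (limitIsoCycles T).hom ≫ ((barComplex J 𝒜).obj T).iCycles 0 = limitToBar T :=
  IsLimit.conePointUniqueUpToIso_hom_comp _ _ WalkingParallelPair.zero

lemma limitIsoCycles_naturality {S : J ⥤ 𝒜} (α : S ⟶ T) :
    limMap α ≫ (limitIsoCycles T).hom =
      (limitIsoCycles S).hom ≫ HomologicalComplex.cyclesMap ((barComplex J 𝒜).map α) 0 := by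
  rw [← cancel_mono (((barComplex J 𝒜).obj T).iCycles 0), Category.assoc, Category.assoc,
    limitIsoCycles_hom_iCycles, HomologicalComplex.cyclesMap_i]
  exact (limitToBar_naturality α).trans ((reassoc_of% (limitIsoCycles_hom_iCycles (T := S))) _).symm

/-- The limit is the zeroth cohomology of the bar complex. -/
noncomputable def limIsoHomologyBarComplex :
    lim (J := J) (C := 𝒜) ≅ barComplex J 𝒜 ⋙ HomologicalComplex.homologyFunctor 𝒜 _ 0 :=
  NatIso.ofComponents (fun T => limitIsoCycles T ≪≫ CochainComplex.isoHomologyπ₀ _) fun α =>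
    ((reassoc_of% (limitIsoCycles_naturality α)) _).trans <|
      (_ ≫= (HomologicalComplex.homologyπ_naturality _ 0).symm).trans
        (Category.assoc _ _ _).symm

end HomologyZero

lemma precomp_map_zero_succ {C : Type*} [Category C] {n : ℕ} (σ : ComposableArrows C n) {X : C}
    (g : X ⟶ σ.left) (k : Fin (n + 1)) :
    (σ.precomp g).map (homOfLE (Fin.zero_le k.succ)) = g ≫ σ.map (homOfLE (Fin.zero_le k)) := by
  obtain ⟨_ | k, hk⟩ := k
  · exact ((g ≫= σ.map_id 0).trans (Category.comp_id g)).symm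
  · rfl

lemma map_homOfLE_eq_comp_eqToHom {C : Type*} [Category C] {n : ℕ} (σ : ComposableArrows C n)
    {i j k : Fin (n + 1)} (hj : i ≤ j) (hk : i ≤ k) (h : j = k) :
    σ.map (homOfLE hj) = σ.map (homOfLE hk) ≫ eqToHom (by rw [h]) := by
  subst h
  rw [eqToHom_refl, Category.comp_id]

lemma precomp_whiskerLeft_δ {C : Type*} [Category C] {n : ℕ} (σ : ComposableArrows C (n + 1))
    {X : C} (g : X ⟶ σ.left) (i : Fin (n + 2)) :
    (σ.precomp g).whiskerLeft (SimplexCategory.δ i.succ).toOrderHom.monotone.functor =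
      ComposableArrows.precomp
        (σ.whiskerLeft (SimplexCategory.δ i).toOrderHom.monotone.functor)
        (g ≫ σ.map (homOfLE (Fin.zero_le (i.succAbove 0)))) := by
  refine ComposableArrows.ext_succ rfl ?_ ?_
  · have h : Fin.succFunctor (n + 1) ⋙ (SimplexCategory.δ i.succ).toOrderHom.monotone.functor =
        (SimplexCategory.δ i).toOrderHom.monotone.functor ⋙ Fin.succFunctor (n + 2) :=
      CategoryTheory.Functor.ext (Fin.succ_succAbove_succ i) fun _ _ _ => Subsingleton.elim _ _
    exact congrArg (· ⋙ σ.precomp g) h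
  · exact (map_homOfLE_eq_comp_eqToHom _ (Fin.zero_le _) (Fin.zero_le (i.succAbove 0).succ)
      (Fin.succ_succAbove_succ i 0)).trans <|
        (precomp_map_zero_succ σ g _ =≫ _).trans (Category.id_comp _).symm

section Coinduced

/-- The functor coinduced from a family `M` of objects, which is right adjoint to forgetting the
action of the morphisms of `J`. -/
noncomputable def coinduced (M : J → 𝒜) : J ⥤ 𝒜 where
  obj x := ∏ᶜ fun p : Σ c, (x ⟶ c) => M p.1
  map {x _} g := Pi.lift fun p => Pi.π (fun q : Σ c, (x ⟶ c) => M q.1) ⟨p.1, g ≫ p.2⟩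
  map_id x := Pi.hom_ext _ _ fun p => by rw [Pi.lift_π, Category.id_comp, Category.id_comp]
  map_comp f g := Pi.hom_ext _ _ fun p => by
    rw [Category.assoc, Pi.lift_π, Pi.lift_π, Pi.lift_π, Category.assoc]

variable {M : J → 𝒜}

/-- The factor of `coinduced M` indexed by a morphism. -/
noncomputable def coinducedπ (M : J → 𝒜) {x c : J} (f : x ⟶ c) : (coinduced M).obj x ⟶ M c :=
  Pi.π (fun p : Σ c, (x ⟶ c) => M p.1) ⟨c, f⟩

lemma coinduced_hom_ext {W : 𝒜} {x : J} {a b : W ⟶ (coinduced M).obj x}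
    (h : ∀ (c : J) (f : x ⟶ c), a ≫ coinducedπ M f = b ≫ coinducedπ M f) : a = b :=
  Pi.hom_ext _ _ fun p => h p.1 p.2

/-- A morphism to `coinduced M` given by its components. -/
noncomputable def coinducedLift {W : 𝒜} {x : J} (a : ∀ (c : J), (x ⟶ c) → (W ⟶ M c)) :
    W ⟶ (coinduced M).obj x :=
  Pi.lift fun p => a p.1 p.2

lemma coinducedLift_coinducedπ {W : 𝒜} {x c : J} (a : ∀ (c : J), (x ⟶ c) → (W ⟶ M c))
    (f : x ⟶ c) : coinducedLift a ≫ coinducedπ M f = a c f :=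
  Pi.lift_π _ _

lemma coinduced_map_coinducedπ {x y c : J} (g : x ⟶ y) (f : y ⟶ c) :
    (coinduced M).map g ≫ coinducedπ M f = coinducedπ M (g ≫ f) :=
  Pi.lift_π _ _

/-- The extra codegeneracy of the bar construction of a coinduced functor, which prolongs
a chain by the indexing morphism of `coinduced M`. -/
noncomputable def barCoinducedExtra (M : J → 𝒜) (n : ℕ) :
    (barObj (coinduced M)).obj ⦋n + 1⦌ ⟶ (barObj (coinduced M)).obj ⦋n⦌ :=
  barLift fun σ => coinducedLift fun _ f =>
    barπ _ (n := ⦋n + 1⦌) (σ.precomp f.op) ≫ coinducedπ M (𝟙 _)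

lemma barCoinducedExtra_barπ {n : ℕ} (σ : ComposableArrows Jᵒᵖ n) {c : J}
    (f : (σ.obj 0).unop ⟶ c) :
    barCoinducedExtra M n ≫ barπ _ (n := ⦋n⦌) σ ≫ coinducedπ M f =
      barπ _ (n := ⦋n + 1⦌) (σ.precomp f.op) ≫ coinducedπ M (𝟙 _) := by
  rw [barCoinducedExtra, reassoc_of% @barLift_barπ, coinducedLift_coinducedπ]
  rfl

lemma barObj_δ_barπ_coinducedπ {n : ℕ} (i : Fin (n + 2)) (σ : ComposableArrows Jᵒᵖ (n + 1)) {c : J}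
    (f : (σ.obj 0).unop ⟶ c) :
    (barObj (coinduced M)).δ i ≫ barπ _ (n := ⦋n + 1⦌) σ ≫ coinducedπ M f =
      barπ _ (n := ⦋n⦌) (σ.whiskerLeft (SimplexCategory.δ i).toOrderHom.monotone.functor) ≫
        coinducedπ M ((σ.map (homOfLE (Fin.zero_le _))).unop ≫ f) :=
  ((reassoc_of% (barObj_map_barπ (T := coinduced M) (SimplexCategory.δ i) σ)) _).trans
    (_ ≫= coinduced_map_coinducedπ _ _)

lemma barπ_coinducedπ_congr {n : ℕ} {σ τ : ComposableArrows Jᵒᵖ n} (h : σ = τ) {c : J}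
    {f : (σ.obj 0).unop ⟶ c} {g : (τ.obj 0).unop ⟶ c} (hf : f = eqToHom (by rw [h]) ≫ g) :
    barπ _ (n := ⦋n⦌) σ ≫ coinducedπ M f = barπ _ (n := ⦋n⦌) τ ≫ coinducedπ M g := by
  subst h
  rw [hf, eqToHom_refl, Category.id_comp]

lemma barObj_δ_zero_barCoinducedExtra (n : ℕ) :
    (barObj (coinduced M)).δ 0 ≫ barCoinducedExtra M n = 𝟙 _ :=
  bar_hom_ext (n := ⦋n⦌) fun σ => coinduced_hom_ext fun c f => by
    rw [Category.assoc, Category.assoc, Category.id_comp, barCoinducedExtra_barπ]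
    exact (barObj_δ_barπ_coinducedπ 0 (σ.precomp f.op) (𝟙 c)).trans
      (barπ_coinducedπ_congr rfl ((Category.comp_id _).trans (Category.id_comp _).symm))

lemma barObj_δ_succ_barCoinducedExtra (n : ℕ) (i : Fin (n + 2)) :
    (barObj (coinduced M)).δ i.succ ≫ barCoinducedExtra M (n + 1) =
      barCoinducedExtra M n ≫ (barObj (coinduced M)).δ i :=
  bar_hom_ext (n := ⦋n + 1⦌) fun σ => coinduced_hom_ext fun c f => by
    rw [Category.assoc, Category.assoc, Category.assoc, Category.assoc, barCoinducedExtra_barπ,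
      barObj_δ_barπ_coinducedπ i]
    refine (barObj_δ_barπ_coinducedπ i.succ (σ.precomp f.op) (𝟙 c)).trans <|
      .trans ?_ (barCoinducedExtra_barπ _ _).symm
    refine barπ_coinducedπ_congr (precomp_whiskerLeft_δ σ f.op i) ?_
    exact congrArg (Quiver.Hom.unop · ≫ 𝟙 c) ((σ.precomp f.op).map_id 0)

lemma barComplex_coinduced_exactAt [Abelian 𝒜] (M : J → 𝒜) (n : ℕ) :
    ((barComplex J 𝒜).obj (coinduced M)).ExactAt (n + 1) :=
  exactAt_succ_of_extraCodegeneracy (barCoinducedExtra M) barObj_δ_zero_barCoinducedExtra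
    barObj_δ_succ_barCoinducedExtra n

/-- The unit of the adjunction between restriction to objects and coinduction. -/
noncomputable def toCoinduced (T : J ⥤ 𝒜) : T ⟶ coinduced T.obj where
  app x := coinducedLift fun _ f => T.map f
  naturality x y g := coinduced_hom_ext fun c f => by
    rw [Category.assoc, Category.assoc, coinducedLift_coinducedπ, coinduced_map_coinducedπ,
      coinducedLift_coinducedπ, T.map_comp]

instance (T : J ⥤ 𝒜) : Mono (toCoinduced T) := by
  have (x : J) : Mono ((toCoinduced T).app x) :=
    have h : (toCoinduced T).app x ≫ coinducedπ T.obj (𝟙 x) = 𝟙 (T.obj x) :=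
      (coinducedLift_coinducedπ _ _).trans (T.map_id x)
    (SplitMono.mk _ h).mono
  exact NatTrans.mono_of_mono_app _

lemma barComplex_injective_exactAt [Abelian 𝒜] (I : J ⥤ 𝒜) [Injective I] (n : ℕ) :
    ((barComplex J 𝒜).obj I).ExactAt (n + 1) := by
  let H := barComplex J 𝒜 ⋙ HomologicalComplex.homologyFunctor 𝒜 _ (n + 1)
  have hH : IsZero (H.obj (coinduced I.obj)) :=
    (HomologicalComplex.exactAt_iff_isZero_homology _ _).1 (barComplex_coinduced_exactAt I.obj n)
  have hI : H.map (toCoinduced I) ≫ H.map (Injective.factorThru (𝟙 I) (toCoinduced I)) =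
      𝟙 (H.obj I) := by
    rw [← H.map_comp, Injective.comp_factorThru, H.map_id]
  rw [HomologicalComplex.exactAt_iff_isZero_homology]
  exact (IsZero.iff_id_eq_zero _).2 (hI.symm.trans (hH.eq_zero_of_tgt _ =≫ _ |>.trans zero_comp))

end Coinduced

section Reversal

variable (T : J ⥤ 𝒜) (h : ∀ {x y : J} (θ : x ⟶ y), IsIso (T.map θ))

/-- The degreewise isomorphism underlying `barReversalIso`. For a chain
`j₀ ⟶ ⋯ ⟶ jₙ` in `J`, the inverse of the value of `T` on `j₀ ⟶ jₙ` carries the factor `T jₙ` of the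
source to the factor `T j₀` of the target. -/
noncomputable def barReversalObjIso (n : SimplexCategory) :
    (barObj T).obj n ≅ (barObj (invFunctor T h)).obj n :=
  let along (σ : ComposableArrows Jᵒᵖᵒᵖ n.len) :
      (invFunctor T h).obj (σ.obj (Fin.rev 0)).unop ≅ (invFunctor T h).obj (σ.obj 0).unop :=
    asIso ((invFunctor T h).map (σ.map (homOfLE (Fin.zero_le (Fin.rev 0)))).unop)
  (Pi.whiskerEquiv
    (f := fun σ : ComposableArrows Jᵒᵖᵒᵖ n.len => (invFunctor T h).obj (σ.obj 0).unop)
    (g := fun σ : ComposableArrows Jᵒᵖ n.len => T.obj (σ.obj 0).unop)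
    (reverseChain Jᵒᵖ n.len) along).symm

variable {T}

lemma barReversalObjIso_hom_barπ {n : SimplexCategory} (σ : ComposableArrows Jᵒᵖᵒᵖ n.len) :
    (barReversalObjIso T h n).hom ≫ barπ (invFunctor T h) σ =
      barπ T (revFunctor n.len ⋙ σ.leftOp) ≫
        (invFunctor T h).map (σ.map (homOfLE (Fin.zero_le (Fin.rev 0)))).unop :=
  Pi.lift_π _ _

lemma barπ_comp_invFunctor_map_congr {m n : SimplexCategory}
    (σ : ComposableArrows Jᵒᵖᵒᵖ n.len) {F G : Fin (m.len + 1) ⥤ (Fin (n.len + 1))ᵒᵖ} (hFG : F = G) :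
    barπ T (F ⋙ σ.leftOp) ≫
        (invFunctor T h).map (σ.map (homOfLE (Fin.zero_le (F.obj 0).unop))).unop =
      barπ T (G ⋙ σ.leftOp) ≫
        (invFunctor T h).map (σ.map (homOfLE (Fin.zero_le (G.obj 0).unop))).unop := by
  rw [hFG]

lemma barObj_rev_map_comp_barReversalObjIso_barπ {m n : SimplexCategory} (θ : m ⟶ n)
    (σ : ComposableArrows Jᵒᵖᵒᵖ n.len) :
    (barObj T).map (SimplexCategory.rev.map θ) ≫ (barReversalObjIso T h n).hom ≫
        barπ (invFunctor T h) σ =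
      (barReversalObjIso T h m).hom ≫ (barObj (invFunctor T h)).map θ ≫
        barπ (invFunctor T h) σ := by
  have hL := (reassoc_of% (barObj_map_barπ (T := T) (SimplexCategory.rev.map θ)
    (revFunctor n.len ⋙ σ.leftOp)))
      ((invFunctor T h).map (σ.map (homOfLE (Fin.zero_le (Fin.rev 0)))).unop)
  have hR := (reassoc_of% (barReversalObjIso_hom_barπ h
    (σ.whiskerLeft θ.toOrderHom.monotone.functor)))
      ((invFunctor T h).map (σ.map (homOfLE (Fin.zero_le (θ.toOrderHom 0)))).unop)
  calc
    _ = barπ T ((SimplexCategory.rev.map θ).toOrderHom.monotone.functor ⋙ revFunctor n.len ⋙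
          σ.leftOp) ≫
        (invFunctor T h).map (σ.map (homOfLE (Fin.zero_le
          (Fin.rev (Fin.rev (θ.toOrderHom (Fin.rev 0))))))).unop :=
      (_ ≫= barReversalObjIso_hom_barπ h σ).trans <| hL.trans
        (_ ≫= map_comp_invFunctor_map_chain T h σ _ _)
    _ = barπ T (revFunctor m.len ⋙ θ.toOrderHom.monotone.functor.op ⋙ σ.leftOp) ≫
        (invFunctor T h).map (σ.map (homOfLE (Fin.zero_le (θ.toOrderHom (Fin.rev 0))))).unop :=
      barπ_comp_invFunctor_map_congr h σ (rev_map_comp_revFunctor θ)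
    _ = _ := by
      rw [barObj_map_barπ]
      exact (_ ≫= (invFunctor_map_comp_map_chain T h σ _ _).symm).trans
        ((Category.assoc _ _ _).symm.trans hR.symm)

variable (T)

/-- Up to reversal of the simplices, a functor inverting all morphisms and its inverse have
isomorphic bar constructions. -/
noncomputable def barReversalIso :
    SimplexCategory.rev ⋙ barObj T ≅ barObj (invFunctor T h) :=
  NatIso.ofComponents (barReversalObjIso T h) fun θ => bar_hom_ext fun σ =>
    (Category.assoc _ _ _).trans <|
      (barObj_rev_map_comp_barReversalObjIso_barπ h θ σ).trans (Category.assoc _ _ _).symm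

end Reversal

/-- A functor inverting all morphisms and its inverse have isomorphic bar complexes. -/
noncomputable def barComplexInvFunctorIso [Preadditive 𝒜] (T : J ⥤ 𝒜)
    (h : ∀ {x y : J} (θ : x ⟶ y), IsIso (T.map θ)) :
    (barComplex J 𝒜).obj T ≅ (barComplex Jᵒᵖ 𝒜).obj (invFunctor T h) :=
  cofaceComplexIsoOfRevIso (barReversalIso T h)

/-- The derived functors of the limit are the cohomology of the bar complex. -/
noncomputable def rightDerivedLimIso [Abelian 𝒜] [HasLimitsOfShape J 𝒜] [AB4StarOfSize.{w} 𝒜]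
    [HasInjectiveResolutions (J ⥤ 𝒜)] (T : J ⥤ 𝒜) (n : ℕ) :
    ((lim (J := J) (C := 𝒜)).rightDerived n).obj T ≅ ((barComplex J 𝒜).obj T).homology n :=
  rightDerivedIsoHomology (barComplex J 𝒜) limIsoHomologyBarComplex
    barComplex_injective_exactAt T n

end Bar

theorem stmt_12_general.{w, v, u} {C : Type w} [SmallCategory C] {𝒜 : Type u} [Category.{v} 𝒜]
    [Abelian 𝒜] [HasLimitsOfSize.{w, w} 𝒜] [AB4StarOfSize.{w} 𝒜]
    (T : C ⥤ 𝒜) (h : ∀ {x y : C} (θ : x ⟶ y), IsIso (T.map θ))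
    [HasInjectiveResolutions (C ⥤ 𝒜)] [HasInjectiveResolutions (Cᵒᵖ ⥤ 𝒜)] (n : ℕ) :
    Nonempty (((lim (J := C) (C := 𝒜)).rightDerived n).obj T ≅
      ((lim (J := Cᵒᵖ) (C := 𝒜)).rightDerived n).obj (invFunctor T h)) :=
  ⟨rightDerivedLimIso T n ≪≫
    (HomologicalComplex.homologyFunctor 𝒜 _ n).mapIso (barComplexInvFunctorIso T h) ≪≫
    (rightDerivedLimIso (invFunctor T h) n).symm⟩

theorem stmt_12 {R : Type} [Ring R] (X : SSet.{0}) (T : SimplexCat X ⥤ ModuleCat.{0} R)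
    (h : ∀ {x y : SimplexCat X} (θ : x ⟶ y), IsIso (T.map θ))
    [EnoughInjectives (SimplexCat X ⥤ ModuleCat.{0} R)]
    [EnoughInjectives ((SimplexCat X)ᵒᵖ ⥤ ModuleCat.{0} R)] (n : ℕ) :
    Nonempty
      ((((Limits.lim (J := SimplexCat X) (C := ModuleCat.{0} R)).rightDerived n).obj T) ≅
        (((Limits.lim (J := (SimplexCat X)ᵒᵖ) (C := ModuleCat.{0} R)).rightDerived n).obj
          (invFunctor T h))) :=
  stmt_12_general T h n
end

section
/- Let X be a simplicial set, R a ring, and T : (Δ/X)ᵒᵖ ⥤ Mod R a contravariant local system, i.e. a functor sending every morphism of (Δ/X)ᵒᵖ to an isomorphism. Let T^{-1} : Δ/X ⥤ Mod R be the functor with T^{-1}(x) = T(x) on objects and T^{-1}(θ) = (T(θ))^{-1} on morphisms. Then for every n ≥ 0 there is an isomorphism between the n-th left derived functor of the colimit over (Δ/X)ᵒᵖ applied to T and the n-th left derived functor of the colimit over Δ/X applied to T^{-1}: colim_n^{(Δ/X)ᵒᵖ} T ≅ colim_n^{Δ/X} T^{-1}; equivalently, H_n^{GZ}(X, T) ≅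 H_n(Δ/X, T^{-1}). -/
/-!
STATEMENT 13: For a simplicial set `X`, a ring `R` and a contravariant local system
`T : (Δ/X)ᵒᵖ ⥤ Mod R` (a functor inverting all morphisms), with inverse covariant system
`T⁻¹ : Δ/X ⥤ Mod R`, the `n`-th left derived functor of the colimit over `(Δ/X)ᵒᵖ`
applied to `T` is isomorphic to the `n`-th left derived functor of the colimit over
`Δ/X` applied to `T⁻¹`:  `colim_n^{(Δ/X)ᵒᵖ} T ≅ colim_n^{Δ/X} T⁻¹`.
-/

open CategoryTheory CategoryTheory.Limits Opposite

/-- The inverse of a functor `Cᵒᵖ ⥤ 𝒜` inverting all morphisms: it has the same values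
on objects, and sends a morphism `θ` to `(T(θ))⁻¹`. -/
noncomputable def invFunctorOp {C : Type*} [Category C] {𝒜 : Type*} [Category 𝒜]
    (T : Cᵒᵖ ⥤ 𝒜) (h : ∀ {x y : Cᵒᵖ} (θ : x ⟶ y), IsIso (T.map θ)) : C ⥤ 𝒜 where
  obj x := T.obj (op x)
  map {x y} θ := haveI := h θ.op; inv (T.map θ.op)
  map_id x := by simp
  map_comp {x y z} θ θ' := by
    haveI := h θ.op; haveI := h θ'.op; haveI := h (θ ≫ θ').op
    dsimp
    apply IsIso.inv_eq_of_hom_inv_id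
    rw [T.map_comp]
    simp


/-!
This is the balancing argument for `Tor`, carried out for colimits. The bifunctor
`W : C ⥤ Cᵒᵖ ⥤ A`, `W b a = ∐_{a ⟶ b} T⁻¹ b`, has rows `W b -` freely generated by `T⁻¹ b` in
`op b`; a freely generated functor is acyclic for the colimit, which returns its generator. As `T`
inverts all morphisms, `T⁻¹ b ≅ T a` along every `a ⟶ b`, so that the column `W - a` is
isomorphic to the functor freely generated by `T a` in `a`. Both `Lₙ colim T⁻¹` and `Lₙ colim T`
therefore compute the `n`-th left derived functor of the total colimit at `W`.
-/

universe w v v₁ v₂ v₃ u₁ u₂ u₃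

section LeftDerived

variable {A : Type u₁} [Category.{v₁} A] [Abelian A]
  {B : Type u₂} [Category.{v₂} B] [Abelian B]
  {D : Type u₃} [Category.{v₃} D] [Abelian D]

lemma quasiIsoAt_zero_map_π (F : A ⥤ B) [F.Additive] [PreservesFiniteColimits F] {X : A}
    (P : ProjectiveResolution X) :
    QuasiIsoAt ((F.mapHomologicalComplex _).map P.π) 0 := by
  rw [ChainComplex.quasiIsoAt₀_iff, ShortComplex.quasiIso_iff_of_zeros']
  · have w : F.map (P.complex.d 1 0) ≫ F.map (P.π.f 0) = 0 := by
      rw [← F.map_comp, P.complex_d_comp_π_f_zero, F.map_zero]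
    exact (ShortComplex.exact_and_epi_g_iff_g_is_cokernel (S := ShortComplex.mk _ _ w)).2
      ⟨CokernelCofork.mapIsColimit _ P.isColimitCokernelCofork F⟩
  · exact (congrArg F.map (P.complex.shape 0 0 (by simp))).trans (F.map_zero _ _)
  all_goals exact F.map_zero _ _

variable [HasProjectiveResolutions A]

/-- `F`-acyclic objects: those on which the higher left derived functors of `F` vanish. -/
def IsLeftAcyclic (F : A ⥤ B) [F.Additive] (X : A) : Prop :=
  ∀ i : ℕ, IsZero ((F.leftDerived (i + 1)).obj X)

lemma IsLeftAcyclic.of_iso {F : A ⥤ B} [F.Additive] {X Y : A} (hX : IsLeftAcyclic F X)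
    (e : X ≅ Y) : IsLeftAcyclic F Y :=
  fun i ↦ (hX i).of_iso ((F.leftDerived (i + 1)).mapIso e.symm)

lemma isLeftAcyclic_of_preservesHomology (F : A ⥤ B) [F.Additive] [F.PreservesHomology] (X : A) :
    IsLeftAcyclic F X := fun i ↦ by
  let P := projectiveResolution X
  have exactAt : ((F.mapHomologicalComplex _).obj P.complex).ExactAt (i + 1) :=
    (P.complex_exactAt_succ i).map F
  exact exactAt.isZero_homology.of_iso (P.isoLeftDerivedObj F (i + 1))

noncomputable def leftDerivedIsoOfIso {F G : A ⥤ B} [F.Additive] [G.Additive] (e : F ≅ G) (n : ℕ) :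
    F.leftDerived n ≅ G.leftDerived n where
  hom := NatTrans.leftDerived e.hom n
  inv := NatTrans.leftDerived e.inv n
  hom_inv_id := by rw [← NatTrans.leftDerived_comp, e.hom_inv_id, NatTrans.leftDerived_id]
  inv_hom_id := by rw [← NatTrans.leftDerived_comp, e.inv_hom_id, NatTrans.leftDerived_id]

/-- The image under `F` of a projective resolution of an `F`-acyclic object: by acyclicity it is
still a resolution. -/
noncomputable def mapProjectiveResolutionOfIsLeftAcyclic (F : A ⥤ B) [F.Additive]
    [PreservesFiniteColimits F] [F.PreservesProjectiveObjects] {X : A} (hX : IsLeftAcyclic F X)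
    (P : ProjectiveResolution X) : ProjectiveResolution (F.obj X) where
  complex := (F.mapHomologicalComplex _).obj P.complex
  projective n := F.projective_obj_of_projective (P.projective n)
  π := (F.mapHomologicalComplex _).map P.π ≫
    (HomologicalComplex.singleMapHomologicalComplex F _ 0).hom.app X
  quasiIso := by
    suffices QuasiIso ((F.mapHomologicalComplex _).map P.π) from inferInstance
    refine ⟨fun n ↦ ?_⟩
    cases n with
    | zero => exact quasiIsoAt_zero_map_π F P
    | succ n =>
      rw [quasiIsoAt_iff_exactAt']
      · exact (HomologicalComplex.exactAt_iff_isZero_homology _ _).2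
          ((hX n).of_iso (P.isoLeftDerivedObj F (n + 1)).symm)
      · exact ShortComplex.exact_of_isZero_X₂ _ (F.map_isZero
          (HomologicalComplex.isZero_single_obj_X _ _ _ _ n.succ_ne_zero))

/-- The degenerate Grothendieck spectral sequence: `Lₙ(F ⋙ G) X ≅ Lₙ G (F X)` for `X` acyclic
for `F`. -/
noncomputable def leftDerivedCompObjIsoOfIsLeftAcyclic [HasProjectiveResolutions B] (F : A ⥤ B)
    [F.Additive] [PreservesFiniteColimits F] [F.PreservesProjectiveObjects] (G : B ⥤ D)
    [G.Additive] {X : A} (hX : IsLeftAcyclic F X) (n : ℕ) :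
    ((F ⋙ G).leftDerived n).obj X ≅ (G.leftDerived n).obj (F.obj X) :=
  let P := projectiveResolution X
  P.isoLeftDerivedObj (F ⋙ G) n ≪≫
    ((mapProjectiveResolutionOfIsLeftAcyclic F hX P).isoLeftDerivedObj G n).symm

noncomputable def leftDerivedCompObjIsoOfPreservesHomology (F : A ⥤ B) [F.Additive] (G : B ⥤ D)
    [G.Additive] [G.PreservesHomology] (X : A) (n : ℕ) :
    ((F ⋙ G).leftDerived n).obj X ≅ G.obj ((F.leftDerived n).obj X) :=
  let P := projectiveResolution X
  P.isoLeftDerivedObj (F ⋙ G) n ≪≫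
    (((F.mapHomologicalComplex _).obj P.complex).sc n).mapHomologyIso G ≪≫
    G.mapIso (P.isoLeftDerivedObj F n).symm

end LeftDerived

section FunctorCategory

variable {J : Type v} [SmallCategory J] {A : Type u₁} [Category.{v} A] [Abelian A]
  [EnoughProjectives A] [HasColimits A]

instance (j : J) : (evaluationLeftAdjoint A j).PreservesProjectiveObjects :=
  Functor.preservesProjectiveObjects_of_adjunction_of_preservesEpimorphisms
    (evaluationAdjunctionRight A j)

/-- A projective functor surjecting onto `S` (no minimality is implied): the coproduct over `j` of
the functors freely generated in `j` by a projective object over `S j`. -/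
noncomputable abbrev projectiveOver (S : J ⥤ A) : J ⥤ A :=
  ∐ fun j : J ↦ (evaluationLeftAdjoint A j).obj (Projective.over (S.obj j))

namespace projectiveOver

/-- The epimorphism given on the `j`-th summand by the transpose of the cover of `S j`. -/
noncomputable def π (S : J ⥤ A) : projectiveOver S ⟶ S :=
  Sigma.desc fun j ↦ ((evaluationAdjunctionRight A j).homEquiv _ _).symm (Projective.π (S.obj j))

instance (S : J ⥤ A) : Epi (π S) := by
  have (j : J) : Epi ((π S).app j) := by
    let ι : (evaluationLeftAdjoint A j).obj (Projective.over (S.obj j)) ⟶ projectiveOver S :=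
      Sigma.ι (fun j ↦ (evaluationLeftAdjoint A j).obj (Projective.over (S.obj j))) j
    have ι_π : ι ≫ π S =
        ((evaluationAdjunctionRight A j).homEquiv _ _).symm (Projective.π (S.obj j)) :=
      Sigma.ι_desc _ _
    rw [Equiv.eq_symm_apply, Adjunction.homEquiv_unit, Functor.map_comp, ← Category.assoc] at ι_π
    exact epi_of_epi_fac ι_π
  exact NatTrans.epi_of_epi_app _

end projectiveOver

instance : EnoughProjectives (J ⥤ A) where
  presentation S := ⟨{ p := projectiveOver S, f := projectiveOver.π S }⟩

instance (j : J) : ((evaluation J A).obj j).PreservesProjectiveObjects where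
  projective_obj {P} _ := by
    have retract : Retract P (projectiveOver P) :=
      ⟨Projective.factorThru (𝟙 P) (projectiveOver.π P), projectiveOver.π P,
        Projective.factorThru_comp _ _⟩
    have (i : J) : Projective (((evaluation J A).obj j).obj
        ((evaluationLeftAdjoint A i).obj (Projective.over (P.obj i)))) :=
      inferInstanceAs (Projective (∐ fun _ : i ⟶ j ↦ Projective.over (P.obj i)))
    have : Projective (((evaluation J A).obj j).obj (projectiveOver P)) :=
      Projective.of_iso (PreservesCoproduct.iso ((evaluation J A).obj j) _).symm inferInstance
    exact (retract.map ((evaluation J A).obj j)).projective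

section

variable {B : Type u₂} [Category.{v₂} B] [Abelian B]

noncomputable def leftDerivedWhiskeringRightObjIso (F : A ⥤ B) [F.Additive] (W : J ⥤ A) (j : J)
    (n : ℕ) :
    ((((Functor.whiskeringRight J A B).obj F).leftDerived n).obj W).obj j ≅
      (F.leftDerived n).obj (W.obj j) :=
  (leftDerivedCompObjIsoOfPreservesHomology ((Functor.whiskeringRight J A B).obj F)
    ((evaluation J B).obj j) W n).symm ≪≫
  leftDerivedCompObjIsoOfIsLeftAcyclic ((evaluation J A).obj j) F
    (isLeftAcyclic_of_preservesHomology _ W) n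

lemma IsLeftAcyclic.whiskeringRight {F : A ⥤ B} [F.Additive] {W : J ⥤ A}
    (hW : ∀ j, IsLeftAcyclic F (W.obj j)) :
    IsLeftAcyclic ((Functor.whiskeringRight J A B).obj F) W := fun i ↦
  (Functor.isZero_iff _).2 fun j ↦ (hW j i).of_iso (leftDerivedWhiskeringRightObjIso F W j (i + 1))

end

end FunctorCategory

section IteratedColimit

variable {J K : Type v} [SmallCategory J] [SmallCategory K] {A : Type u₁} [Category.{v} A]
  [Abelian A] [HasColimits A]

instance : ((Functor.whiskeringRight J (K ⥤ A) A).obj colim).PreservesProjectiveObjects :=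
  Functor.preservesProjectiveObjects_of_adjunction_of_preservesEpimorphisms
    (colimConstAdj.whiskerRight J)

instance : PreservesFiniteColimits ((Functor.whiskeringRight J (K ⥤ A) A).obj colim) :=
  have := (colimConstAdj (J := K) (C := A)).whiskerRight J |>.leftAdjoint_preservesColimits
  inferInstance

variable (J K A) in
/-- The colimit of a bifunctor, computed one variable at a time. -/
noncomputable def iteratedColim : (J ⥤ K ⥤ A) ⥤ A :=
  (Functor.whiskeringRight J (K ⥤ A) A).obj colim ⋙ colim

instance : (iteratedColim J K A).Additive := by
  unfold iteratedColim
  infer_instance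

instance : (flipFunctor J K A).IsEquivalence :=
  Functor.flipping.isEquivalence_functor

instance : (flipFunctor J K A).Additive where

variable (J K A) in
/-- The interchange of colimits. -/
noncomputable def flipCompIteratedColimIso :
    flipFunctor J K A ⋙ iteratedColim K J A ≅ iteratedColim J K A :=
  (Functor.associator _ _ _).symm ≪≫
    Functor.isoWhiskerRight colimIsoFlipCompWhiskerColim.symm _ ≪≫
    preservesColimitNatIso colim

variable [EnoughProjectives A]

noncomputable def leftDerivedIteratedColimObjIso {W : J ⥤ K ⥤ A}
    (hW : ∀ j, IsLeftAcyclic colim (W.obj j)) (n : ℕ) :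
    ((iteratedColim J K A).leftDerived n).obj W ≅ (colim.leftDerived n).obj (W ⋙ colim) :=
  leftDerivedCompObjIsoOfIsLeftAcyclic _ _ (IsLeftAcyclic.whiskeringRight hW) n

noncomputable def leftDerivedIteratedColimObjFlipIso (W : J ⥤ K ⥤ A) (n : ℕ) :
    ((iteratedColim J K A).leftDerived n).obj W ≅
      ((iteratedColim K J A).leftDerived n).obj W.flip :=
  (leftDerivedIsoOfIso (flipCompIteratedColimIso J K A) n).symm.app W ≪≫
    leftDerivedCompObjIsoOfIsLeftAcyclic (flipFunctor J K A) (iteratedColim K J A)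
      (isLeftAcyclic_of_preservesHomology _ W) n

/-- Balancing: the derived colimits of the two partial colimits of `W` agree. -/
noncomputable def leftDerivedColimBalancingIso {W : J ⥤ K ⥤ A}
    (hW : ∀ j, IsLeftAcyclic colim (W.obj j)) (hW' : ∀ k, IsLeftAcyclic colim (W.flip.obj k))
    (n : ℕ) :
    (colim.leftDerived n).obj (W ⋙ colim) ≅ (colim.leftDerived n).obj (W.flip ⋙ colim) :=
  (leftDerivedIteratedColimObjIso hW n).symm ≪≫ leftDerivedIteratedColimObjFlipIso W n ≪≫
    leftDerivedIteratedColimObjIso hW' n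

end IteratedColimit

section Copower

variable {J : Type u₁} [Category.{v₁} J] {K : Type u₂} [Category.{v₂} K] {A : Type u₃}
  [Category.{v₃} A] [HasCoproducts.{w} A]

/-- The copower bifunctor `(j, k) ↦ ∐_{F j k} S j`. -/
noncomputable def copower (F : J ⥤ K ⥤ Type w) (S : J ⥤ A) : J ⥤ K ⥤ A where
  obj j := F.obj j ⋙ sigmaConst.obj (S.obj j)
  map f := F.map f ◫ sigmaConst.map (S.map f)
  map_comp f g := by rw [F.map_comp, S.map_comp, sigmaConst.map_comp, NatTrans.exchange]

namespace copower

/-- The inclusion of the summand indexed by `x`. -/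
noncomputable def ι (F : J ⥤ K ⥤ Type w) (S : J ⥤ A) {j : J} {k : K} (x : (F.obj j).obj k) :
    S.obj j ⟶ ((copower F S).obj j).obj k :=
  Sigma.ι (fun _ : (F.obj j).obj k ↦ S.obj j) x

variable {F : J ⥤ K ⥤ Type w} {S : J ⥤ A}

/-- The morphism out of a copower determined by its restrictions to the summands. -/
noncomputable def desc {j : J} {k : K} {M : A} (φ : (F.obj j).obj k → (S.obj j ⟶ M)) :
    ((copower F S).obj j).obj k ⟶ M :=
  Sigma.desc φ

@[simp]
lemma ι_desc {j : J} {k : K} {M : A} (φ : (F.obj j).obj k → (S.obj j ⟶ M))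
    (x : (F.obj j).obj k) : ι F S x ≫ desc φ = φ x :=
  Sigma.ι_desc _ _

@[simp]
lemma ι_desc_assoc {j : J} {k : K} {M N : A} (φ : (F.obj j).obj k → (S.obj j ⟶ M))
    (x : (F.obj j).obj k) (g : M ⟶ N) : ι F S x ≫ desc φ ≫ g = φ x ≫ g := by
  rw [← Category.assoc, ι_desc]

lemma hom_ext {j : J} {k : K} {M : A} {φ ψ : ((copower F S).obj j).obj k ⟶ M}
    (h : ∀ x, ι F S x ≫ φ = ι F S x ≫ ψ) : φ = ψ :=
  Sigma.hom_ext _ _ h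

@[simp]
lemma ι_obj_map {j : J} {k l : K} (g : k ⟶ l) (x : (F.obj j).obj k) :
    ι F S x ≫ ((copower F S).obj j).map g = ι F S ((F.obj j).map g x) := by
  simp [ι, copower, Sigma.ι_comp_map']

@[simp]
lemma ι_map_app {i j : J} {k : K} (f : i ⟶ j) (x : (F.obj i).obj k) :
    ι F S x ≫ ((copower F S).map f).app k = S.map f ≫ ι F S ((F.map f).app k x) := by
  simp [ι, copower, Sigma.ι_comp_map']

@[simp]
lemma ι_obj_map_assoc {j : J} {k l : K} (g : k ⟶ l) (x : (F.obj j).obj k) {M : A}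
    (φ : ((copower F S).obj j).obj l ⟶ M) :
    ι F S x ≫ ((copower F S).obj j).map g ≫ φ = ι F S ((F.obj j).map g x) ≫ φ := by
  rw [← Category.assoc, ι_obj_map]

@[simp]
lemma ι_map_app_assoc {i j : J} {k : K} (f : i ⟶ j) (x : (F.obj i).obj k) {M : A}
    (φ : ((copower F S).obj j).obj k ⟶ M) :
    ι F S x ≫ ((copower F S).map f).app k ≫ φ = S.map f ≫ ι F S ((F.map f).app k x) ≫ φ := by
  rw [← Category.assoc, ι_map_app, Category.assoc]

/-- The fold map `∐_{F j k} S j ⟶ S j`. -/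
noncomputable def fold (F : J ⥤ K ⥤ Type w) (S : J ⥤ A) (j : J) :
    (copower F S).obj j ⟶ (Functor.const K).obj (S.obj j) where
  app _ := desc fun _ ↦ 𝟙 _
  naturality _ _ _ := hom_ext fun _ ↦ by simp

@[simp]
lemma ι_fold_app {j : J} {k : K} (x : (F.obj j).obj k) :
    ι F S x ≫ (fold F S j).app k = 𝟙 (S.obj j) :=
  ι_desc _ _

@[simp]
lemma ι_fold_app_assoc {j : J} {k : K} (x : (F.obj j).obj k) {M : A} (φ : S.obj j ⟶ M) :
    ι F S x ≫ (fold F S j).app k ≫ φ = φ :=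
  ι_desc_assoc _ _ _ |>.trans (Category.id_comp φ)

noncomputable def isColimitFold {j : J} {X : K} (h : (F.obj j).CorepresentableBy X) :
    IsColimit (Cocone.mk _ (fold F S j)) where
  desc s := ι F S (h.homEquiv (𝟙 X)) ≫ s.ι.app X
  fac s k := hom_ext fun x ↦ by
    obtain ⟨g, rfl⟩ := h.homEquiv.surjective x
    rw [ι_fold_app_assoc, h.homEquiv_eq g, ← ι_obj_map, Category.assoc, s.w]
  uniq s m hm := by rw [← hm, ι_fold_app_assoc]

noncomputable def compColimIso [HasColimitsOfShape K A] [∀ j, (F.obj j).IsCorepresentable] :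
    copower F S ⋙ colim ≅ S :=
  NatIso.ofComponents
    (fun j ↦ (colimit.isColimit _).coconePointUniqueUpToIso
      (isColimitFold (F.obj j).corepresentableBy))
    fun f ↦ colimit.hom_ext fun k ↦ hom_ext fun x ↦ by simp

end copower

/-- The functor sending an object `M` to the copowers `k ↦ ∐_{F k} M`. -/
noncomputable abbrev copowerFunctor (F : K ⥤ Type w) : A ⥤ K ⥤ A :=
  copower ((Functor.const A).obj F) (𝟭 A)

namespace copowerFunctor

/-- The value of a copower is the colimit of a constant functor. -/
noncomputable def objObjIso (F : K ⥤ Type w) (M : A) (k : K) :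
    colim.obj ((Functor.const (Discrete (F.obj k))).obj M) ≅ ((copowerFunctor F).obj M).obj k :=
  HasColimit.isoOfNatIso (Discrete.natIso fun _ ↦ Iso.refl M)

@[simp]
lemma ι_objObjIso_hom {F : K ⥤ Type w} {M : A} {k : K} (x : F.obj k) :
    colimit.ι ((Functor.const (Discrete (F.obj k))).obj M) ⟨x⟩ ≫ (objObjIso F M k).hom =
      copower.ι ((Functor.const A).obj F) (𝟭 A) (j := M) x :=
  (HasColimit.isoOfNatIso_ι_hom _ _).trans (Category.id_comp _)

@[simp]
lemma ι_objObjIso_hom_assoc {F : K ⥤ Type w} {M N : A} {k : K} (x : F.obj k)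
    (φ : ((copowerFunctor F).obj M).obj k ⟶ N) :
    colimit.ι ((Functor.const (Discrete (F.obj k))).obj M) ⟨x⟩ ≫ (objObjIso F M k).hom ≫ φ =
      copower.ι ((Functor.const A).obj F) (𝟭 A) (j := M) x ≫ φ := by
  rw [← Category.assoc, ι_objObjIso_hom]

noncomputable def compEvaluationIso (F : K ⥤ Type w) (k : K) :
    Functor.const (Discrete (F.obj k)) ⋙ colim ≅ copowerFunctor F ⋙ (evaluation K A).obj k :=
  NatIso.ofComponents (objObjIso F · k) fun f ↦ colimit.hom_ext fun ⟨x⟩ ↦ by simp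

open copower in
/-- The copower functor of a functor corepresented by `X` is the free functor at `X`. -/
noncomputable def adjunctionEvaluation {F : K ⥤ Type w} {X : K} (h : F.CorepresentableBy X) :
    copowerFunctor (A := A) F ⊣ (evaluation K A).obj X :=
  Adjunction.mkOfHomEquiv
    { homEquiv M S :=
        { toFun φ := ι _ (𝟭 A) (h.homEquiv (𝟙 X)) ≫ φ.app X
          invFun φ :=
            { app k := desc fun x ↦ φ ≫ S.map (h.homEquiv.symm x)
              naturality k l g := hom_ext fun x ↦ by
                simp [← h.homEquiv_symm_comp] }
          left_inv φ := by
            ext k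
            refine hom_ext fun x ↦ ?_
            rw [ι_desc, Category.assoc, ← φ.naturality, ι_obj_map_assoc]
            simp [← h.homEquiv_comp]
          right_inv φ := by simp }
      homEquiv_naturality_left_symm _ _ := by
        ext k
        exact hom_ext fun x ↦ by simp
      homEquiv_naturality_right _ _ := by simp }

instance {F : K ⥤ Type w} [F.IsCorepresentable] : (copowerFunctor (A := A) F).IsLeftAdjoint :=
  (adjunctionEvaluation F.corepresentableBy).isLeftAdjoint

noncomputable def compColimIso [HasColimitsOfShape K A] (F : K ⥤ Type w) [F.IsCorepresentable] :
    copowerFunctor F ⋙ colim ≅ 𝟭 A :=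
  have (M : A) : (((Functor.const A).obj F).obj M).IsCorepresentable := ‹F.IsCorepresentable›
  copower.compColimIso

end copowerFunctor

end Copower

section CopowerAcyclic

variable {K : Type v} [SmallCategory K] {A : Type u₁} [Category.{v} A]
  [Abelian A] [HasColimits A] {F : K ⥤ Type v} [F.IsCorepresentable]

instance : (copowerFunctor (A := A) F).Additive :=
  (copowerFunctor.adjunctionEvaluation F.corepresentableBy).left_adjoint_additive

instance : (copowerFunctor (A := A) F).PreservesProjectiveObjects :=
  Functor.preservesProjectiveObjects_of_adjunction_of_preservesEpimorphisms
    (copowerFunctor.adjunctionEvaluation F.corepresentableBy)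

instance [AB4 A] : PreservesFiniteLimits (copowerFunctor (A := A) F) where
  preservesFiniteLimits I _ _ :=
    preservesLimitsOfShape_of_evaluation (copowerFunctor (A := A) F) I fun k ↦
      preservesLimitsOfShape_of_natIso (copowerFunctor.compEvaluationIso F k)

variable [EnoughProjectives A] [AB4 A]

lemma isLeftAcyclic_colim_copowerFunctor_obj (F : K ⥤ Type v) [F.IsCorepresentable] (M : A) :
    IsLeftAcyclic colim ((copowerFunctor F).obj M) := fun i ↦
  (isLeftAcyclic_of_preservesHomology (𝟭 A) M i).of_iso <|
    (leftDerivedCompObjIsoOfIsLeftAcyclic (copowerFunctor F) colim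
      (isLeftAcyclic_of_preservesHomology _ M) (i + 1)).symm ≪≫
    (leftDerivedIsoOfIso (copowerFunctor.compColimIso F) (i + 1)).app M

end CopowerAcyclic

section LocalSystem

variable {C : Type v} [SmallCategory C] {A : Type u₁} [Category.{v} A]

instance (b : C) : (yoneda.obj b).IsCorepresentable :=
  .mk' (Coyoneda.objOpOp b)

section

variable (T : Cᵒᵖ ⥤ A) (h : ∀ {x y : Cᵒᵖ} (θ : x ⟶ y), IsIso (T.map θ))

/-- The isomorphism `T⁻¹ b ≅ T a` induced by `k : a ⟶ b`. -/
noncomputable def invFunctorOpObjIso {a : Cᵒᵖ} {b : C} (k : a.unop ⟶ b) :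
    (invFunctorOp T h).obj b ≅ T.obj a :=
  @asIso _ _ _ _ (T.map k.op) (h k.op)

lemma invFunctorOp_map_comp_objIso_hom {a : Cᵒᵖ} {b c : C} (k : a.unop ⟶ b) (f : b ⟶ c) :
    (invFunctorOp T h).map f ≫ (invFunctorOpObjIso T h (k ≫ f)).hom =
      (invFunctorOpObjIso T h k).hom := by
  have := h f.op
  simp [invFunctorOp, invFunctorOpObjIso]

lemma invFunctorOpObjIso_hom_comp_map {a a' : Cᵒᵖ} {b : C} (k : a.unop ⟶ b) (g : a ⟶ a') :
    (invFunctorOpObjIso T h k).hom ≫ T.map g = (invFunctorOpObjIso T h (g.unop ≫ k)).hom :=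
  (T.map_comp k.op g).symm

variable [HasCoproducts.{v} A]

/-- Both sides are copowers over `a.unop ⟶ b`, compared summandwise. -/
noncomputable def copowerYonedaInvFunctorOpObjIso (a : Cᵒᵖ) (b : C) :
    ((copower yoneda (invFunctorOp T h)).obj b).obj a ≅ ((copower coyoneda T).obj a).obj b :=
  Sigma.mapIso fun k : a.unop ⟶ b ↦ invFunctorOpObjIso T h k

lemma ι_copowerYonedaInvFunctorOpObjIso_hom {a : Cᵒᵖ} {b : C} (k : a.unop ⟶ b) :
    copower.ι yoneda (invFunctorOp T h) k ≫ (copowerYonedaInvFunctorOpObjIso T h a b).hom =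
      (invFunctorOpObjIso T h k).hom ≫ copower.ι coyoneda T (j := a) k :=
  Sigma.ι_mapIso_hom _ _

lemma ι_copowerYonedaInvFunctorOpObjIso_hom_assoc {a : Cᵒᵖ} {b : C} (k : a.unop ⟶ b) {M : A}
    (φ : ((copower coyoneda T).obj a).obj b ⟶ M) :
    copower.ι yoneda (invFunctorOp T h) k ≫ (copowerYonedaInvFunctorOpObjIso T h a b).hom ≫ φ =
      (invFunctorOpObjIso T h k).hom ≫ copower.ι coyoneda T (j := a) k ≫ φ := by
  rw [← Category.assoc, ι_copowerYonedaInvFunctorOpObjIso_hom, Category.assoc]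

open copower in
noncomputable def copowerYonedaInvFunctorOpFlipIso :
    (copower yoneda (invFunctorOp T h)).flip ≅ copower coyoneda T :=
  NatIso.ofComponents
    (fun a ↦ NatIso.ofComponents (copowerYonedaInvFunctorOpObjIso T h a) fun f ↦
      hom_ext fun x ↦ by
        have ι_twist := ι_copowerYonedaInvFunctorOpObjIso_hom T h (x ≫ f)
        rw [Functor.flip_obj_map, ι_map_app_assoc, ι_copowerYonedaInvFunctorOpObjIso_hom_assoc,
          ι_obj_map, ← invFunctorOp_map_comp_objIso_hom T h x f, Category.assoc]
        exact congrArg _ ι_twist)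
    fun g ↦ by
      ext b
      refine hom_ext fun x ↦ ?_
      dsimp only [NatTrans.comp_app, Functor.flip_obj_obj, Functor.flip_map_app,
        NatIso.ofComponents_hom_app]
      rw [ι_obj_map_assoc, ι_copowerYonedaInvFunctorOpObjIso_hom_assoc, ι_map_app,
        ← Category.assoc, invFunctorOpObjIso_hom_comp_map]
      exact ι_copowerYonedaInvFunctorOpObjIso_hom _ _ _

end

variable [Abelian A] [HasColimits A] [EnoughProjectives A] [AB4 A]

theorem stmt_13_general (T : Cᵒᵖ ⥤ A)
    (h : ∀ {x y : Cᵒᵖ} (θ : x ⟶ y), IsIso (T.map θ)) (n : ℕ) :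
    Nonempty ((colim.leftDerived n).obj T ≅ (colim.leftDerived n).obj (invFunctorOp T h)) := by
  let W := copower yoneda (invFunctorOp T h)
  let twist : W.flip ≅ copower coyoneda T := copowerYonedaInvFunctorOpFlipIso T h
  have acyclic_row (b : C) : IsLeftAcyclic colim (W.obj b) :=
    isLeftAcyclic_colim_copowerFunctor_obj (yoneda.obj b) _
  have acyclic_column (a : Cᵒᵖ) : IsLeftAcyclic colim (W.flip.obj a) :=
    (isLeftAcyclic_colim_copowerFunctor_obj (coyoneda.obj a) (T.obj a)).of_iso
      (twist.symm.app a)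
  let colimColumns : W.flip ⋙ colim ≅ T :=
    Functor.isoWhiskerRight twist colim ≪≫ copower.compColimIso
  exact ⟨(colim.leftDerived n).mapIso colimColumns.symm ≪≫
    (leftDerivedColimBalancingIso acyclic_row acyclic_column n).symm ≪≫
    (colim.leftDerived n).mapIso copower.compColimIso⟩

end LocalSystem

theorem stmt_13 {R : Type} [Ring R] (X : SSet.{0})
    (T : (SimplexCat X)ᵒᵖ ⥤ ModuleCat.{0} R)
    (h : ∀ {x y : (SimplexCat X)ᵒᵖ} (θ : x ⟶ y), IsIso (T.map θ))
    [EnoughProjectives ((SimplexCat X)ᵒᵖ ⥤ ModuleCat.{0} R)]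
    [EnoughProjectives (SimplexCat X ⥤ ModuleCat.{0} R)] (n : ℕ) :
    Nonempty
      ((((Limits.colim (J := (SimplexCat X)ᵒᵖ) (C := ModuleCat.{0} R)).leftDerived n).obj
          T) ≅
        (((Limits.colim (J := SimplexCat X) (C := ModuleCat.{0} R)).leftDerived n).obj
          (invFunctorOp T h))) :=
  stmt_13_general T h n
end
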